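/- Assume φ₀ > 0 and 0 < ρ₀ < (φ₀ − 1)/(1 + φ₀). Then the set of critical points of X in the closed disk D_R consists of exactly two points, both on the horizontal axis: a point (x_c, 0) with x_c ∈ (−R, 0) at which det DX > 0 (a center), and a point (x_s, 0) with x_s ∈ (r₀, R) at which det DX < 0 (a hyperbolic saddle). (Case (c) of Theorem 1.) -/

import Mathlib

/-- The Jacobian matrix of a planar vector field `X : ℝ → ℝ → ℝ × ℝ` at the point `(x, y)`. -/
noncomputable def jacobianMatrix (X : ℝ → ℝ → ℝ × ℝ) (x y : ℝ) : Matrix (Fin 2) (Fin 2) ℝ :=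
  !![deriv (fun s => (X s y).1) x, deriv (fun s => (X x s).1) y;
     deriv (fun s => (X s y).2) x, deriv (fun s => (X x s).2) y]

theorem det_formula (r B θ c x : ℝ) (X : ℝ → ℝ → ℝ × ℝ) (ha : x - r ≠ 0) (hb : x - B ≠ 0)
    (hX : ∀ x y : ℝ, X x y =
      (-θ * y + c * θ * y *
          (1 / ((x - r) ^ 2 + y ^ 2) - 1 / ((x - B) ^ 2 + y ^ 2)),
       θ * x - c * θ *
          ((x - r) / ((x - r) ^ 2 + y ^ 2) -
            (x - B) / ((x - B) ^ 2 + y ^ 2)))) :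
    (jacobianMatrix X x 0).det =
      θ ^ 2 * (1 - c * (1 / (x - r) ^ 2 - 1 / (x - B) ^ 2)) *
        (1 + c * (1 / (x - r) ^ 2 - 1 / (x - B) ^ 2)) := by
  have ha2 : (x - r) ^ 2 + (0 : ℝ) ^ 2 ≠ 0 := by simpa using ha
  have hb2 : (x - B) ^ 2 + (0 : ℝ) ^ 2 ≠ 0 := by simpa using hb
  have h1 : deriv (fun s => (X s 0).1) x = 0 := by simp [hX]
  have h2 : deriv (fun s => (X x s).1) 0 =
      -θ + c * θ * (1 / (x - r) ^ 2 - 1 / (x - B) ^ 2) := by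
    simp only [hX]
    have hd : ∀ k : ℝ, HasDerivAt (fun s : ℝ => k ^ 2 + s ^ 2) (2 * 0) 0 := by
      intro k
      simpa using ((hasDerivAt_id (0 : ℝ)).pow 2).const_add (k ^ 2)
    have hl : ∀ k : ℝ, HasDerivAt (fun s : ℝ => k * s) k 0 := by
      intro k
      simpa using (hasDerivAt_id (0 : ℝ)).const_mul k
    have := (hl (-θ)).add ((hl (c * θ)).mul
      (((hasDerivAt_const (0 : ℝ) (1 : ℝ)).div (hd (x - r)) ha2).sub
        ((hasDerivAt_const (0 : ℝ) (1 : ℝ)).div (hd (x - B)) hb2)))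
    refine this.deriv.trans ?_
    simp
  have h3 : deriv (fun s => (X s 0).2) x =
      θ + c * θ * (1 / (x - r) ^ 2 - 1 / (x - B) ^ 2) := by
    simp only [hX]
    have hk : ∀ k : ℝ, HasDerivAt (fun s : ℝ => s - k) 1 x := by
      intro k
      exact (hasDerivAt_id x).sub_const k
    have hd : ∀ k : ℝ, HasDerivAt (fun s : ℝ => (s - k) ^ 2 + (0 : ℝ) ^ 2) (2 * (x - k)) x := by
      intro k
      simpa using ((hk k).pow 2).add_const ((0 : ℝ) ^ 2)
    have hl : HasDerivAt (fun s : ℝ => θ * s) θ x := by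
      simpa using (hasDerivAt_id x).const_mul θ
    have := hl.sub ((((hk r).div (hd r) ha2).sub ((hk B).div (hd B) hb2)).const_mul (c * θ))
    refine this.deriv.trans ?_
    field_simp
    ring
  rw [jacobianMatrix, Matrix.det_fin_two_of, h1, h2, h3]
  ring

set_option maxHeartbeats 1600000 in
/-- case (c) of Theorem 1: for `φ₀ > 0` and `0 < ρ₀ < (φ₀−1)/(1+φ₀)`
the critical points of `X` in `D_R` are exactly a center `(x_c, 0)` with
`x_c ∈ (−R, 0)` and a hyperbolic saddle `(x_s, 0)` with `x_s ∈ (r₀, R)`. -/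
theorem case_c_two_critical_points
    (R r₀ θ₀ Γ : ℝ)
    (hR : 0 < R) (hr₀ : 0 < r₀) (hrR : r₀ < R) (hθ : θ₀ ≠ 0) (hΓ : Γ ≠ 0)
    (c ρ₀ φ₀ : ℝ) (hc : c = Γ / (2 * Real.pi * θ₀))
    (hρ : ρ₀ = r₀ / R) (hφ : φ₀ = R ^ 2 / c) (hφpos : 0 < φ₀)
    (hregion : 0 < ρ₀ ∧ ρ₀ < (φ₀ - 1) / (1 + φ₀))
    (X : ℝ → ℝ → ℝ × ℝ)
    (hX : ∀ x y : ℝ, X x y =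
      (-θ₀ * y + c * θ₀ * y *
          (1 / ((x - r₀) ^ 2 + y ^ 2) - 1 / ((x - R ^ 2 / r₀) ^ 2 + y ^ 2)),
       θ₀ * x - c * θ₀ *
          ((x - r₀) / ((x - r₀) ^ 2 + y ^ 2) -
            (x - R ^ 2 / r₀) / ((x - R ^ 2 / r₀) ^ 2 + y ^ 2)))) :
    ∃ xc xs : ℝ,
      (-R < xc ∧ xc < 0) ∧ X xc 0 = (0, 0) ∧ 0 < (jacobianMatrix X xc 0).det ∧
      (r₀ < xs ∧ xs < R) ∧ X xs 0 = (0, 0) ∧ (jacobianMatrix X xs 0).det < 0 ∧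
      (∀ x y : ℝ, x ^ 2 + y ^ 2 ≤ R ^ 2 → (x, y) ≠ (r₀, 0) → X x y = (0, 0) →
        (x, y) = (xc, 0) ∨ (x, y) = (xs, 0)) := by
  obtain ⟨B, hB⟩ : ∃ B, B = R ^ 2 / r₀ := ⟨_, rfl⟩
  rw [← hB] at hX
  have hrB : r₀ * B = R ^ 2 := by rw [hB]; field_simp
  have hRB : R < B := by
    by_contra h
    push Not at h
    nlinarith
  have hcpos : 0 < c := by
    rw [hφ] at hφpos
    by_contra h
    push Not at h
    have := div_nonpos_of_nonneg_of_nonpos (sq_nonneg R) h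
    linarith
  have hreg : c * (R + r₀) < R ^ 2 * (R - r₀) := by
    have h := hregion.2
    rw [lt_div_iff₀ (by linarith), hρ, hφ] at h
    have h2 := mul_lt_mul_of_pos_right h (mul_pos hR hcpos)
    have e1 : r₀ / R * (1 + R ^ 2 / c) * (R * c) = r₀ * (c + R ^ 2) := by field_simp
    have e2 : (R ^ 2 / c - 1) * (R * c) = R * (R ^ 2 - c) := by field_simp
    rw [e1, e2] at h2
    linarith
  have hBr : 0 < B - r₀ := by linarith
  -- the axis equation
  have hax : ∀ x, x ≠ r₀ → x ≠ B →
      (X x 0 = (0, 0) ↔ x * (x - r₀) * (B - x) = c * (B - r₀)) := by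
    intro x h1 h2
    have h1 : x - r₀ ≠ 0 := sub_ne_zero.2 h1
    have h2 : x - B ≠ 0 := sub_ne_zero.2 h2
    have e : θ₀ * x - c * θ₀ * ((x - r₀) / ((x - r₀) ^ 2 + 0 ^ 2) -
            (x - B) / ((x - B) ^ 2 + 0 ^ 2)) =
        -θ₀ / ((x - r₀) * (x - B)) * (x * (x - r₀) * (B - x) - c * (B - r₀)) := by
      rw [zero_pow two_ne_zero, add_zero, add_zero]
      field_simp
      ring
    rw [hX, e]
    simp [hθ, h1, h2, sub_eq_zero]
  have hcont : Continuous (fun x : ℝ => x * (x - r₀) * (B - x)) := by fun_prop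
  have hcB : 0 < c * (B - r₀) := mul_pos hcpos hBr
  have key : c * (B - r₀) * r₀ = c * (R + r₀) * (R - r₀) := by
    linear_combination c * hrB
  have hRr : 0 < R - r₀ := by linarith
  obtain ⟨xs, ⟨hs1, hs2⟩, hs⟩ : ∃ x ∈ Set.Ioo r₀ R, x * (x - r₀) * (B - x) = c * (B - r₀) := by
    have := intermediate_value_Ioo hrR.le (hcont.continuousOn (s := Set.Icc r₀ R))
    refine this ⟨by simpa using hcB, ?_⟩
    have h := mul_lt_mul_of_pos_right hreg hRr
    have e : R * (R - r₀) * (B - R) * r₀ = R ^ 2 * (R - r₀) * (R - r₀) := by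
      linear_combination R * (R - r₀) * hrB
    refine lt_of_mul_lt_mul_right ?_ hr₀.le
    linarith
  obtain ⟨xc, ⟨hc1, hc2⟩, hcc⟩ : ∃ x ∈ Set.Ioo (-R) 0,
      x * (x - r₀) * (B - x) = c * (B - r₀) := by
    have := intermediate_value_Ioo' (neg_nonpos.2 hR.le)
      (hcont.continuousOn (s := Set.Icc (-R) 0))
    refine this ⟨by simpa using hcB, ?_⟩
    have h := mul_lt_mul_of_pos_right hreg hRr
    have e : -R * (-R - r₀) * (B - -R) * r₀ = R ^ 2 * (R + r₀) * (R + r₀) := by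
      linear_combination R * (R + r₀) * hrB
    have h3 : R ^ 2 * (R - r₀) * (R - r₀) < R ^ 2 * (R + r₀) * (R + r₀) := by
      have : 0 < R ^ 2 * (R * r₀) := by positivity
      nlinarith
    refine lt_of_mul_lt_mul_right ?_ hr₀.le
    linarith
  -- the determinant factor
  have hK : ∀ x, x ≠ r₀ → x ≠ B → x * (x - r₀) * (B - x) = c * (B - r₀) →
      1 - c * (1 / (x - r₀) ^ 2 - 1 / (x - B) ^ 2) =
        (R ^ 2 - x ^ 2) / ((x - r₀) * (x - B)) := by
    intro x h1 h2 h
    have h1 : x - r₀ ≠ 0 := sub_ne_zero.2 h1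
    have h2 : x - B ≠ 0 := sub_ne_zero.2 h2
    field_simp
    rw [← hrB]
    linear_combination -(2 * x - r₀ - B) * h
  have hKpos : ∀ x, x ≠ r₀ → x ≤ R → 
      0 < 1 + c * (1 / (x - r₀) ^ 2 - 1 / (x - B) ^ 2) := by
    intro x h1 h2
    have h1 : x - r₀ ≠ 0 := sub_ne_zero.2 h1
    have h3 : 0 < (x - r₀) ^ 2 := by positivity
    have h5 : 2 * R ≤ B + r₀ := by
      have : 0 ≤ (B + r₀) ^ 2 - (2 * R) ^ 2 := by nlinarith [sq_nonneg (B - r₀)]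
      nlinarith
    have h4 : (x - r₀) ^ 2 ≤ (x - B) ^ 2 := by nlinarith
    have := one_div_le_one_div_of_le h3 h4
    have := mul_nonneg hcpos.le (sub_nonneg.2 this)
    linarith
  have hθ2 : 0 < θ₀ ^ 2 := by positivity
  have hcr : xc ≠ r₀ := by linarith [hc2, hr₀] |> fun h : xc < r₀ => h.ne
  have hcB' : xc ≠ B := (by linarith : xc < B).ne
  have hsr : xs ≠ r₀ := hs1.ne'
  have hsB' : xs ≠ B := (by linarith : xs < B).ne
  refine ⟨xc, xs, ⟨hc1, hc2⟩, (hax xc hcr hcB').2 hcc, ?_, ⟨hs1, hs2⟩,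
    (hax xs hsr hsB').2 hs, ?_, ?_⟩
  · rw [det_formula r₀ B θ₀ c xc X (sub_ne_zero.2 hcr) (sub_ne_zero.2 hcB') hX]
    refine mul_pos (mul_pos hθ2 ?_) (hKpos xc hcr (by linarith))
    rw [hK xc hcr hcB' hcc]
    apply div_pos
    · nlinarith
    · exact mul_pos_of_neg_of_neg (by linarith) (by linarith)
  · rw [det_formula r₀ B θ₀ c xs X (sub_ne_zero.2 hsr) (sub_ne_zero.2 hsB') hX]
    refine mul_neg_of_neg_of_pos (mul_neg_of_pos_of_neg hθ2 ?_) (hKpos xs hsr hs2.le)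
    rw [hK xs hsr hsB' hs]
    apply div_neg_of_pos_of_neg
    · nlinarith
    · exact mul_neg_of_pos_of_neg (by linarith) (by linarith)
  · intro x y hd hne h0
    by_cases hy : y = 0
    · subst hy
      have hxr : x ≠ r₀ := fun h => hne (by rw [h])
      have hx2 : x ≤ R := by nlinarith
      have hx1 : -R ≤ x := by nlinarith
      have hxB : x ≠ B := (by linarith : x < B).ne
      have hg := (hax x hxr hxB).1 h0
      rcases lt_or_gt_of_ne hxr with hlt | hgt
      · left
        have hx0 : x < 0 := by
          by_contra h
          push Not at h
          have : 0 ≤ x * (r₀ - x) * (B - x) :=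
            mul_nonneg (mul_nonneg h (by linarith)) (by linarith)
          linarith
        have mono : ∀ u v : ℝ, u < v → v < 0 →
            v * (v - r₀) * (B - v) < u * (u - r₀) * (B - u) := by
          intro u v huv hv
          have h1 : v * (v - r₀) < u * (u - r₀) := by nlinarith
          have h2 : 0 < v * (v - r₀) := mul_pos_of_neg_of_neg hv (by linarith)
          exact mul_lt_mul'' h1 (by linarith) h2.le (by linarith)
        rcases lt_trichotomy x xc with h | h | h
        · linarith [mono x xc h hc2]
        · rw [h]
        · linarith [mono xc x h hx0]
      · right
        have h5 : 2 * R ≤ B + r₀ := by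
          have : 0 ≤ (B + r₀) ^ 2 - (2 * R) ^ 2 := by nlinarith [sq_nonneg (B - r₀)]
          nlinarith
        have mono : ∀ u v : ℝ, r₀ < u → u < v → v ≤ R →
            u * (u - r₀) * (B - u) < v * (v - r₀) * (B - v) := by
          intro u v hu huv hv
          have p1 : 0 < (v - r₀) ^ 2 := by
            have : 0 < v - r₀ := by linarith
            positivity
          have p2 : 0 < u * (v - u) := mul_pos (by linarith) (by linarith)
          have p3 : 0 ≤ (B - (2 * v - r₀)) * (u + v - r₀) :=
            mul_nonneg (by linarith) (by linarith)
          have p4 : 0 < (v - u) * ((v - r₀) ^ 2 + u * (v - u) +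
              (B - (2 * v - r₀)) * (u + v - r₀)) := mul_pos (by linarith) (by linarith)
          linarith [p4]
        rcases lt_trichotomy x xs with h | h | h
        · linarith [mono x xs hgt h hs2.le]
        · rw [h]
        · linarith [mono xs x hs1 h hx2]
    · exfalso
      have hy2 : 0 < y ^ 2 := by positivity
      rw [hX, Prod.mk.injEq] at h0
      obtain ⟨e1, e2⟩ := h0
      obtain ⟨A, hA⟩ : ∃ A, A = (x - r₀) ^ 2 + y ^ 2 := ⟨_, rfl⟩
      obtain ⟨Q, hQ⟩ : ∃ Q, Q = (x - B) ^ 2 + y ^ 2 := ⟨_, rfl⟩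
      rw [← hA, ← hQ] at e1 e2
      have hA0 : 0 < A := by rw [hA]; positivity
      have hQ0 : 0 < Q := by rw [hQ]; positivity
      have f1 : c * (Q - A) = A * Q := by
        have : θ₀ * y * (c * (Q - A) - A * Q) = 0 := by
          field_simp at e1
          linear_combination e1
        have h := (mul_eq_zero.1 this).resolve_left (mul_ne_zero hθ hy)
        linarith
      have f2 : c * ((x - r₀) * Q - (x - B) * A) = x * (A * Q) := by
        have : θ₀ * (x * (A * Q) - c * ((x - r₀) * Q - (x - B) * A)) = 0 := by
          field_simp at e2
          linear_combination e2
        have h := (mul_eq_zero.1 this).resolve_left hθ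
        linarith
      have f3 : B * A = r₀ * Q := by
        have : c * (B * A - r₀ * Q) = 0 := by linear_combination f2 - x * f1
        have h := (mul_eq_zero.1 this).resolve_left hcpos.ne'
        linarith
      have f4 : x ^ 2 + y ^ 2 = R ^ 2 := by
        have : (B - r₀) * (x ^ 2 + y ^ 2 - R ^ 2) = 0 := by
          rw [hA, hQ] at f3
          rw [← hrB]
          linear_combination f3
        have h := (mul_eq_zero.1 this).resolve_left hBr.ne'
        linarith
      have f5 : c * (B - r₀) = A * B := by
        have : A * (c * (B - r₀) - A * B) = 0 := by
          linear_combination r₀ * f1 + (c - A) * f3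
        have h := (mul_eq_zero.1 this).resolve_left hA0.ne'
        linarith
      have hxR : x < R := by nlinarith
      have f6 : (R - r₀) ^ 2 < A := by nlinarith
      have f7 : c * (R + r₀) * (R - r₀) = A * R ^ 2 := by
        rw [← key, f5, ← hrB]; ring
      have h := mul_lt_mul_of_pos_right hreg hRr
      have h8 := mul_lt_mul_of_pos_right f6 (pow_pos hR 2)
      nlinarith
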